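/- Let G be a well-covered graph having no isolated vertices. Then the following are equivalent: (1) G belongs to the class W2; (2) the induced subgraph G[V(G) \ N[v]] belongs to the class W2 for every vertex v ∈ V(G); (3) every vertex of G is a shedding vertex. -/

import Mathlib

open SimpleGraph

/-- A set of vertices is independent if its elements are pairwise nonadjacent. -/
def IsIndep {V : Type*} (G : SimpleGraph V) (S : Set V) : Prop :=
  S.Pairwise fun a b => ¬ G.Adj a b

/-- The closed neighborhood `N[S]` of a set of vertices. -/
def closedNbhd {V : Type*} (G : SimpleGraph V) (S : Set V) : Set V :=
  S ∪ {x | ∃ s ∈ S, G.Adj s x}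

/-- The open neighborhood `N(S) = N[S] \ S` of a set of vertices. -/
def openNbhd {V : Type*} (G : SimpleGraph V) (S : Set V) : Set V :=
  closedNbhd G S \ S

/-- `S` dominates `T` if `T ⊆ N[S]`. -/
def Dominates {V : Type*} (G : SimpleGraph V) (S T : Set V) : Prop :=
  T ⊆ closedNbhd G S

/-- `N₂(v)`: the set of vertices at distance exactly 2 from `v`. -/
def N2 {V : Type*} (G : SimpleGraph V) (v : V) : Set V :=
  {u | u ≠ v ∧ ¬ G.Adj v u ∧ ∃ w, G.Adj v w ∧ G.Adj w u}

/-- A maximal independent set of the subgraph of `G` induced by `A`. -/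
def IsMaximalIndepOn {V : Type*} (G : SimpleGraph V) (A S : Set V) : Prop :=
  S ⊆ A ∧ IsIndep G S ∧ ∀ T, T ⊆ A → IsIndep G T → S ⊆ T → S = T

/-- A maximal independent set of `G`. -/
def IsMaximalIndep {V : Type*} (G : SimpleGraph V) (S : Set V) : Prop :=
  IsMaximalIndepOn G Set.univ S

/-- A maximum independent set of the subgraph of `G` induced by `A`. -/
def IsMaxIndepOn {V : Type*} (G : SimpleGraph V) (A S : Set V) : Prop :=
  S ⊆ A ∧ IsIndep G S ∧ ∀ T, T ⊆ A → IsIndep G T → T.ncard ≤ S.ncard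

/-- A maximum independent set of `G`. -/
def IsMaxIndep {V : Type*} (G : SimpleGraph V) (S : Set V) : Prop :=
  IsMaxIndepOn G Set.univ S

/-- The independence number of the subgraph of `G` induced by `A`. -/
noncomputable def alphaOn {V : Type*} (G : SimpleGraph V) (A : Set V) : ℕ :=
  sSup {n | ∃ S, S ⊆ A ∧ IsIndep G S ∧ S.ncard = n}

/-- The independence number `α(G)`. -/
noncomputable def alpha {V : Type*} (G : SimpleGraph V) : ℕ :=
  alphaOn G Set.univ

/-- The subgraph of `G` induced by `A` is well-covered. -/
def WellCoveredOn {V : Type*} (G : SimpleGraph V) (A : Set V) : Prop :=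
  ∀ S, IsMaximalIndepOn G A S → IsMaxIndepOn G A S

/-- `G` is well-covered: every maximal independent set is maximum. -/
def WellCovered {V : Type*} (G : SimpleGraph V) : Prop :=
  WellCoveredOn G Set.univ

/-- The subgraph of `G` induced by `A` is in the class `W₂`. -/
def W2On {V : Type*} (G : SimpleGraph V) (A : Set V) : Prop :=
  ∀ S₁ S₂ : Set V, S₁ ⊆ A → S₂ ⊆ A → IsIndep G S₁ → IsIndep G S₂ → Disjoint S₁ S₂ →
    ∃ T₁ T₂ : Set V, S₁ ⊆ T₁ ∧ S₂ ⊆ T₂ ∧ IsMaxIndepOn G A T₁ ∧ IsMaxIndepOn G A T₂ ∧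
      Disjoint T₁ T₂

/-- `G` belongs to the class `W₂`: every two pairwise disjoint independent sets are
included in two pairwise disjoint maximum independent sets. -/
def W2 {V : Type*} (G : SimpleGraph V) : Prop :=
  W2On G Set.univ

/-- `v` is a shedding vertex: for every independent set `S ⊆ V(G) \ N[v]` there exists
`u ∈ N(v)` such that `S ∪ {u}` is independent. -/
def Shedding {V : Type*} (G : SimpleGraph V) (v : V) : Prop :=
  ∀ S : Set V, Disjoint S (closedNbhd G {v}) → IsIndep G S →
    ∃ u ∈ G.neighborSet v, IsIndep G (insert u S)

/-- The edge `xy` is relating: there is an independent set `S ⊆ V(G) \ N[{x,y}]` such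
that both `S ∪ {x}` and `S ∪ {y}` are maximal independent sets of `G`. -/
def Relating {V : Type*} (G : SimpleGraph V) (x y : V) : Prop :=
  ∃ S : Set V, IsIndep G S ∧ Disjoint S (closedNbhd G {x, y}) ∧
    IsMaximalIndep G (insert x S) ∧ IsMaximalIndep G (insert y S)

/-- `G` contains no cycle of length `k` (as a subgraph). -/
def CycleFree {V : Type*} (G : SimpleGraph V) (k : ℕ) : Prop :=
  ∀ (u : V) (w : G.Walk u u), w.IsCycle → w.length ≠ k

/-- A vertex is simplicial if its closed neighborhood is a clique. -/
def Simplicial {V : Type*} (G : SimpleGraph V) (v : V) : Prop :=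
  G.IsClique (closedNbhd G {v})

theorem indep_insert {V : Type*} {G : SimpleGraph V} {S : Set V} {u : V}
    (hS : IsIndep G S) (hu : ∀ s ∈ S, ¬ G.Adj u s) : IsIndep G (insert u S) := by
  intro a ha b hb hab
  rcases ha with rfl | ha <;> rcases hb with rfl | hb
  · exact absurd rfl hab
  · exact hu b hb
  · exact fun h => hu a ha h.symm
  · exact hS ha hb hab

theorem indep_mono {V : Type*} {G : SimpleGraph V} {S T : Set V}
    (hT : IsIndep G T) (h : S ⊆ T) : IsIndep G S := Set.Pairwise.mono h hT

theorem mem_compl_cn {V : Type*} {G : SimpleGraph V} {v x : V} :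
    x ∈ (closedNbhd G {v})ᶜ ↔ x ≠ v ∧ ¬ G.Adj v x := by
  simp [closedNbhd]

/-- A maximum independent set dominates. -/
theorem max_dom {V : Type*} [Fintype V] {G : SimpleGraph V} {A T : Set V} {v : V}
    (hT : IsMaxIndepOn G A T) (hv : v ∈ A) (hvT : v ∉ T) : ∃ u ∈ T, G.Adj v u := by
  by_contra! hcon
  have h := hT.2.2 (insert v T) (Set.insert_subset hv hT.1) (indep_insert hT.2.1 hcon)
  rw [Set.ncard_insert_of_notMem hvT (Set.toFinite T)] at h
  omega

theorem shed_extend {V : Type*} [Fintype V] {G : SimpleGraph V} (hwc : WellCovered G)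
    (hsh : ∀ v, Shedding G v) {S₁ S₂ : Set V} (h1 : IsIndep G S₁) (h2 : IsIndep G S₂)
    (hd : Disjoint S₁ S₂) :
    ∃ T, S₁ ⊆ T ∧ IsMaxIndepOn G Set.univ T ∧ Disjoint T S₂ := by
  obtain ⟨T, hST, hT⟩ := Set.Finite.exists_le_maximal
    (Set.toFinite {T : Set V | IsIndep G T ∧ Disjoint T S₂}) (a := S₁) ⟨h1, hd⟩
  have hTi : IsIndep G T := hT.1.1
  have hTd : Disjoint T S₂ := hT.1.2
  refine ⟨T, hST, hwc T ⟨Set.subset_univ _, hTi, ?_⟩, hTd⟩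
  have key : ∀ u, u ∉ S₂ → IsIndep G (insert u T) → u ∈ T := by
    intro u hu hi
    exact hT.2 (y := insert u T) ⟨hi, Set.disjoint_insert_left.2 ⟨hu, hTd⟩⟩
      (Set.subset_insert u T) (Set.mem_insert u T)
  intro U _ hU hTU
  refine Set.Subset.antisymm hTU fun v hv => ?_
  by_contra hvT
  have hvi : IsIndep G (insert v T) := indep_mono hU (Set.insert_subset hv hTU)
  by_cases hv2 : v ∈ S₂
  · have hadj : ∀ t ∈ T, ¬ G.Adj v t := fun t ht =>
      hU hv (hTU ht) (fun h => hvT (h ▸ ht))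
    obtain ⟨u, hu, hui⟩ := hsh v T (by
      rw [← Set.subset_compl_iff_disjoint_right]
      intro t ht
      exact mem_compl_cn.2 ⟨fun h => hvT (h ▸ ht), hadj t ht⟩) hTi
    have hvu : G.Adj v u := hu
    exact hadj u (key u (fun h => h2 hv2 h hvu.ne hvu) hui) hvu
  · exact hvT (key v hv2 hvi)

theorem shed_W2 {V : Type*} [Fintype V] {G : SimpleGraph V} (hwc : WellCovered G)
    (hsh : ∀ v, Shedding G v) : W2 G := by
  intro S₁ S₂ _ _ h1 h2 hd
  obtain ⟨T₁, a1, b1, c1⟩ := shed_extend hwc hsh h1 h2 hd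
  obtain ⟨T₂, a2, b2, c2⟩ := shed_extend hwc hsh h2 b1.2.1 c1.symm
  exact ⟨T₁, T₂, a1, a2, b1, b2, c2.symm⟩

theorem W2_shed {V : Type*} [Fintype V] {G : SimpleGraph V} (h : W2 G) (v : V) :
    Shedding G v := by
  intro S hS hi
  rw [← Set.subset_compl_iff_disjoint_right] at hS
  obtain ⟨T₁, T₂, a, b, c, d, e⟩ := h {v} S (Set.subset_univ _) (Set.subset_univ _)
    (Set.pairwise_singleton _ _) hi
    (Set.disjoint_singleton_left.2 fun hv => (mem_compl_cn.1 (hS hv)).1 rfl)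
  obtain ⟨u, hu, huv⟩ := max_dom d (Set.mem_univ v)
    (fun hv => Set.disjoint_left.1 e (a rfl) hv)
  exact ⟨u, huv, indep_mono d.2.1 (Set.insert_subset hu b)⟩

theorem max_diff {V : Type*} [Fintype V] {G : SimpleGraph V} {T : Set V} {v : V}
    (hT : IsMaxIndepOn G Set.univ T) (hv : v ∈ T) :
    IsMaxIndepOn G (closedNbhd G {v})ᶜ (T \ {v}) := by
  refine ⟨fun t ht => mem_compl_cn.2 ⟨ht.2, hT.2.1 hv ht.1 (Ne.symm ht.2)⟩,
    indep_mono hT.2.1 Set.diff_subset, fun U hU hUi => ?_⟩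
  have h := hT.2.2 (insert v U) (Set.subset_univ _)
    (indep_insert hUi fun s hs => (mem_compl_cn.1 (hU hs)).2)
  rw [Set.ncard_insert_of_notMem (fun hvU => (mem_compl_cn.1 (hU hvU)).1 rfl)
    (Set.toFinite U)] at h
  have := Set.ncard_diff_singleton_add_one hv (Set.toFinite T)
  omega

theorem shed_loc {V : Type*} [Fintype V] {G : SimpleGraph V} (hwc : WellCovered G)
    (hsh : ∀ v, Shedding G v) (v : V) : W2On G (closedNbhd G {v})ᶜ := by
  intro S₁ S₂ s1 s2 h1 h2 hd
  have n1 : v ∉ S₁ := fun h => (mem_compl_cn.1 (s1 h)).1 rfl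
  have n2 : v ∉ S₂ := fun h => (mem_compl_cn.1 (s2 h)).1 rfl
  obtain ⟨T₁, a1, b1, c1⟩ := shed_extend hwc hsh
    (indep_insert h1 fun s hs => (mem_compl_cn.1 (s1 hs)).2) h2
    (Set.disjoint_insert_left.2 ⟨n2, hd⟩)
  obtain ⟨T₂, a2, b2, c2⟩ := shed_extend hwc hsh
    (indep_insert h2 fun s hs => (mem_compl_cn.1 (s2 hs)).2)
    (indep_mono b1.2.1 (Set.diff_subset (t := {v})))
    (Set.disjoint_insert_left.2 ⟨fun h => h.2 rfl, c1.symm.mono_right Set.diff_subset⟩)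
  refine ⟨T₁ \ {v}, T₂ \ {v}, ?_, ?_, max_diff b1 (a1 (Set.mem_insert _ _)),
    max_diff b2 (a2 (Set.mem_insert _ _)), c2.symm.mono_right Set.diff_subset⟩
  · exact fun x hx => ⟨a1 (Or.inr hx), fun h => n1 (h ▸ hx)⟩
  · exact fun x hx => ⟨a2 (Or.inr hx), fun h => n2 (h ▸ hx)⟩

theorem loc_shed {V : Type*} [Fintype V] {G : SimpleGraph V}
    (hiso : ∀ v : V, (G.neighborSet v).Nonempty)
    (h : ∀ v : V, W2On G (closedNbhd G {v})ᶜ) (v : V) : Shedding G v := by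
  intro S hS hi
  rw [← Set.subset_compl_iff_disjoint_right] at hS
  rcases S.eq_empty_or_nonempty with rfl | ⟨s, hs⟩
  · obtain ⟨u, hu⟩ := hiso v
    exact ⟨u, hu, indep_insert hi (by simp)⟩
  have hsv := mem_compl_cn.1 (hS hs)
  have hvA : v ∈ (closedNbhd G {s})ᶜ :=
    mem_compl_cn.2 ⟨hsv.1.symm, fun h => hsv.2 h.symm⟩
  obtain ⟨T₁, T₂, a, b, c, d, e⟩ := h s {v} (S \ {s}) (Set.singleton_subset_iff.2 hvA)
    (fun t ht => mem_compl_cn.2 ⟨ht.2, hi hs ht.1 (Ne.symm ht.2)⟩)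
    (Set.pairwise_singleton _ _) (indep_mono hi Set.diff_subset)
    (Set.disjoint_singleton_left.2 fun hv => (mem_compl_cn.1 (hS hv.1)).1 rfl)
  obtain ⟨u, hu, huv⟩ := max_dom d hvA (fun hv => Set.disjoint_left.1 e (a rfl) hv)
  have hus := mem_compl_cn.1 (d.1 hu)
  refine ⟨u, huv, indep_insert hi fun t ht => ?_⟩
  by_cases hts : t = s
  · subst hts
    exact fun h => hus.2 h.symm
  · intro hut
    exact d.2.1 hu (b ⟨ht, hts⟩) hut.ne hut

/-- For a well-covered graph with no isolated vertices, the following are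
equivalent: (1) `G ∈ W₂`; (2) `G[V(G) \ N[v]] ∈ W₂` for every vertex `v`; (3) every
vertex of `G` is shedding. -/
theorem stmt10 {V : Type*} [Fintype V] (G : SimpleGraph V)
    (hwc : WellCovered G) (hiso : ∀ v : V, (G.neighborSet v).Nonempty) :
    (W2 G ↔ ∀ v : V, W2On G (closedNbhd G {v})ᶜ) ∧
    (W2 G ↔ ∀ v : V, Shedding G v) := by
  exact ⟨⟨fun h => shed_loc hwc (W2_shed h), fun h => shed_W2 hwc (loc_shed hiso h)⟩,
    ⟨W2_shed, shed_W2 hwc⟩⟩
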